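/- arXiv:1710.10950 — 2 statements merged into one kernel-verified Lean document; each statement's English description precedes it below -/
import Mathlib

section
/- Let g be a finite-dimensional real Lie algebra with an abelian complex structure J, let a ≥ 0 and h ≥ 1. Suppose ω̄ : g_ℂ → ℂ is a ℂ-linear functional that vanishes on g^{1,0} and on g_J^{h,(0,1)}. Then for every V ∈ g_J^{a,(1,0)}, the ℂ-linear functional Ȳ ↦ ω̄([V, Ȳ]) on g^{0,1} vanishes on g_J^{h−1,(0,1)}. (This is the contraction statement that the Schouten bracket [V, ω̄] = ι_V dω̄ annihilates g_J^{h−1,(0,1)}.) -/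
open scoped TensorProduct

noncomputable section

/-- The `c`-eigenspace of the ℂ-linear extension of `J` on the complexification `ℂ ⊗[ℝ] g`. -/
def eig (g : Type) [LieRing g] [LieAlgebra ℝ g] (J : g →ₗ[ℝ] g) (c : ℂ) :
    Submodule ℂ (ℂ ⊗[ℝ] g) where
  carrier := {x | J.baseChange ℂ x = c • x}
  add_mem' := by
    intro a b ha hb
    simp only [Set.mem_setOf_eq, map_add] at *
    rw [ha, hb, smul_add]
  zero_mem' := by simp
  smul_mem' := by
    intro t x hx
    simp only [Set.mem_setOf_eq, map_smul] at *
    rw [hx, smul_comm]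

/-- The lower central series: `lcs g 0 = g`, `lcs g (m+1) = [lcs g m, g]`. -/
def lcs (g : Type) [LieRing g] [LieAlgebra ℝ g] : ℕ → Submodule ℝ g
  | 0 => ⊤
  | m + 1 => Submodule.span ℝ {x : g | ∃ a ∈ lcs g m, ∃ b : g, ⁅a, b⁆ = x}

/-- `g_J^m = g^m + J(g^m)`. -/
def gJ (g : Type) [LieRing g] [LieAlgebra ℝ g] (J : g →ₗ[ℝ] g) (m : ℕ) : Submodule ℝ g :=
  lcs g m ⊔ Submodule.map J (lcs g m)

/-- Complexification of a real subspace of `g`, inside `ℂ ⊗[ℝ] g`. -/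
def cxS (g : Type) [LieRing g] [LieAlgebra ℝ g] (p : Submodule ℝ g) :
    Submodule ℂ (ℂ ⊗[ℝ] g) := p.baseChange ℂ

/-- `g_J^{m,(1,0)}`. -/
def gJ10 (g : Type) [LieRing g] [LieAlgebra ℝ g] (J : g →ₗ[ℝ] g) (m : ℕ) :
    Submodule ℂ (ℂ ⊗[ℝ] g) := cxS g (gJ g J m) ⊓ eig g J Complex.I

/-- `g_J^{m,(0,1)}`. -/
def gJ01 (g : Type) [LieRing g] [LieAlgebra ℝ g] (J : g →ₗ[ℝ] g) (m : ℕ) :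
    Submodule ℂ (ℂ ⊗[ℝ] g) := cxS g (gJ g J m) ⊓ eig g J (-Complex.I)

/-- The center of `g`, as a submodule. -/
def centerS (g : Type) [LieRing g] [LieAlgebra ℝ g] : Submodule ℝ g where
  carrier := {A | ∀ B : g, ⁅A, B⁆ = 0}
  add_mem' := by
    intro a b ha hb B
    rw [add_lie, ha B, hb B, add_zero]
  zero_mem' := fun B => zero_lie B
  smul_mem' := by
    intro c a ha B
    rw [smul_lie, ha B, smul_zero]

/-- Complex conjugation on the complexification `ℂ ⊗[ℝ] g` (an ℝ-linear map). -/
def conjC (g : Type) [AddCommGroup g] [Module ℝ g] :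
    ℂ ⊗[ℝ] g →ₗ[ℝ] ℂ ⊗[ℝ] g :=
  LinearMap.rTensor g Complex.conjAe.toLinearMap

/-!
For an abelian complex structure `⁅X, J W⁆ = -⁅J X, W⁆`, so bracketing with anything sends `g_J^m`
into `g^{m+1}`, hence into `g_J^{m+1}`, and the same holds after complexification. As `g_J^{m+1}` is
`J`-stable, its complexification is the sum of its `(1,0)` and `(0,1)` parts, and `ω̄` kills both.
-/

section BaseChange

variable {R A M : Type*}

theorem baseChange_le_comap_baseChange {N : Type*} [CommSemiring R] [Semiring A] [Algebra R A]
    [AddCommMonoid M] [Module R M] [AddCommMonoid N] [Module R N] {f : M →ₗ[R] N}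
    {p : Submodule R M} {q : Submodule R N} (hf : p ≤ q.comap f) :
    p.baseChange A ≤ (q.baseChange A).comap (f.baseChange A) := by
  rw [Submodule.baseChange_eq_span, Submodule.span_le]
  rintro _ ⟨v, hv, rfl⟩
  exact Submodule.tmul_mem_baseChange_of_mem 1 (hf hv)

theorem baseChange_baseChange_eq_neg [CommRing R] [Ring A] [Algebra R A] [AddCommGroup M]
    [Module R M] {J : M →ₗ[R] M} (hJ : ∀ v, J (J v) = -v) (x : A ⊗[R] M) :
    J.baseChange A (J.baseChange A x) = -x := by
  have hJJ : J ∘ₗ J = -LinearMap.id := LinearMap.ext hJ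
  rw [← LinearMap.comp_apply, ← LinearMap.baseChange_comp, hJJ, LinearMap.baseChange_neg,
    LinearMap.baseChange_id, LinearMap.neg_apply, LinearMap.id_apply]

theorem baseChange_le_comap_toEnd {L : Type*} [CommRing R] [CommRing A] [Algebra R A]
    [LieRing L] [LieAlgebra R L] [AddCommGroup M] [Module R M] [LieRingModule L M] [LieModule R L M]
    {p q : Submodule R M} (hpq : ∀ x : L, p ≤ q.comap (LieModule.toEnd R L M x)) (X : A ⊗[R] L) :
    p.baseChange A ≤ (q.baseChange A).comap (LieModule.toEnd A (A ⊗[R] L) (A ⊗[R] M) X) := by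
  intro Y hY
  rw [Submodule.mem_comap]
  induction X using TensorProduct.induction_on with
  | zero => rw [map_zero]; exact zero_mem _
  | add X₁ X₂ h₁ h₂ => rw [map_add]; exact add_mem h₁ h₂
  | tmul c x =>
    have tmul_eq_smul : c ⊗ₜ[R] x = c • (1 : A) ⊗ₜ[R] x := by
      rw [TensorProduct.smul_tmul', smul_eq_mul, mul_one]
    rw [tmul_eq_smul, map_smul, LieModule.toEnd_baseChange]
    exact Submodule.smul_mem _ c (baseChange_le_comap_baseChange (hpq x) hY)

end BaseChange

section AbelianComplexStructure

variable {g : Type} [LieRing g] [LieAlgebra ℝ g] {J : g →ₗ[ℝ] g}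

theorem lie_mem_lcs_succ {m : ℕ} (X : g) {B : g} (hB : B ∈ lcs g m) : ⁅X, B⁆ ∈ lcs g (m + 1) := by
  rw [← lie_skew]
  exact neg_mem (Submodule.subset_span ⟨B, hB, X, rfl⟩)

theorem lie_apply_eq_neg_apply_lie (hJ : ∀ v, J (J v) = -v) (hab : ∀ A B : g, ⁅J A, J B⁆ = ⁅A, B⁆)
    (X W : g) : ⁅X, J W⁆ = -⁅J X, W⁆ := by
  rw [← hab, hJ, lie_neg]

theorem lie_mem_lcs_succ_of_mem_gJ (hJ : ∀ v, J (J v) = -v)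
    (hab : ∀ A B : g, ⁅J A, J B⁆ = ⁅A, B⁆) {m : ℕ} (X : g) {B : g} (hB : B ∈ gJ g J m) :
    ⁅X, B⁆ ∈ lcs g (m + 1) := by
  obtain ⟨U, hU, _, ⟨W, hW, rfl⟩, rfl⟩ := Submodule.mem_sup.1 hB
  rw [lie_add, lie_apply_eq_neg_apply_lie hJ hab]
  exact add_mem (lie_mem_lcs_succ X hU) (neg_mem (lie_mem_lcs_succ (J X) hW))

theorem lie_mem_cxS_gJ_succ (hJ : ∀ v, J (J v) = -v) (hab : ∀ A B : g, ⁅J A, J B⁆ = ⁅A, B⁆)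
    {m : ℕ} (V : ℂ ⊗[ℝ] g) {Y : ℂ ⊗[ℝ] g} (hY : Y ∈ cxS g (gJ g J m)) :
    ⁅V, Y⁆ ∈ cxS g (gJ g J (m + 1)) :=
  baseChange_le_comap_toEnd
    (fun X _ hB ↦ Submodule.mem_sup_left (lie_mem_lcs_succ_of_mem_gJ hJ hab X hB)) V hY

theorem gJ_le_comap (hJ : ∀ v, J (J v) = -v) (m : ℕ) : gJ g J m ≤ (gJ g J m).comap J := by
  refine sup_le (fun U hU ↦ Submodule.mem_sup_right ⟨U, hU, rfl⟩) ?_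
  rintro _ ⟨W, hW, rfl⟩
  rw [Submodule.mem_comap, hJ]
  exact Submodule.mem_sup_left (neg_mem hW)

theorem sub_smul_baseChange_mem_eig (hJ : ∀ v, J (J v) = -v) {c : ℂ} (hc : c * c = -1)
    (x : ℂ ⊗[ℝ] g) : x - c • J.baseChange ℂ x ∈ eig g J c := by
  change J.baseChange ℂ (x - c • J.baseChange ℂ x) = c • (x - c • J.baseChange ℂ x)
  rw [map_sub, map_smul, baseChange_baseChange_eq_neg hJ, smul_sub, smul_smul, hc]
  module

theorem cxS_inf_eig_sup_cxS_inf_eig (hJ : ∀ v, J (J v) = -v) {p : Submodule ℝ g}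
    (hp : p ≤ p.comap J) :
    cxS g p ⊓ eig g J Complex.I ⊔ cxS g p ⊓ eig g J (-Complex.I) = cxS g p := by
  refine le_antisymm (sup_le inf_le_left inf_le_left) fun x hx ↦ ?_
  have hJx : J.baseChange ℂ x ∈ cxS g p := baseChange_le_comap_baseChange hp hx
  have component_mem {c : ℂ} (hc : c * c = -1) :
      (2⁻¹ : ℂ) • (x - c • J.baseChange ℂ x) ∈ cxS g p ⊓ eig g J c :=
    Submodule.smul_mem _ _
      ⟨sub_mem hx (Submodule.smul_mem _ c hJx), sub_smul_baseChange_mem_eig hJ hc x⟩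
  refine Submodule.mem_sup.2 ⟨_, component_mem Complex.I_mul_I, _,
    component_mem (by rw [neg_mul_neg, Complex.I_mul_I]), ?_⟩
  module

theorem gJ10_sup_gJ01 (hJ : ∀ v, J (J v) = -v) (m : ℕ) :
    gJ10 g J m ⊔ gJ01 g J m = cxS g (gJ g J m) :=
  cxS_inf_eig_sup_cxS_inf_eig hJ (gJ_le_comap hJ m)

theorem statement6_general {M : Type*} [AddCommGroup M] [Module ℂ M] (hJ : ∀ v, J (J v) = -v)
    (hab : ∀ A B : g, ⁅J A, J B⁆ = ⁅A, B⁆) (m : ℕ) (ω : (ℂ ⊗[ℝ] g) →ₗ[ℂ] M)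
    (hω10 : ∀ x ∈ gJ10 g J (m + 1), ω x = 0) (hω01 : ∀ x ∈ gJ01 g J (m + 1), ω x = 0)
    (V : ℂ ⊗[ℝ] g) {Y : ℂ ⊗[ℝ] g} (hY : Y ∈ cxS g (gJ g J m)) : ω ⁅V, Y⁆ = 0 := by
  have cxS_le_ker : cxS g (gJ g J (m + 1)) ≤ LinearMap.ker ω := by
    rw [← gJ10_sup_gJ01 hJ]
    exact sup_le hω10 hω01
  exact cxS_le_ker (lie_mem_cxS_gJ_succ hJ hab V hY)

end AbelianComplexStructure

/-- If `h ≥ 1` and the ℂ-linear functional `ω̄` on `g_ℂ` vanishes on `g^{1,0}`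
and on `g_J^{h,(0,1)}`, then for every `V ∈ g_J^{a,(1,0)}` the functional `Ȳ ↦ ω̄([V, Ȳ])`
vanishes on `g_J^{h-1,(0,1)}`. -/
theorem statement6 (g : Type) [LieRing g] [LieAlgebra ℝ g] [FiniteDimensional ℝ g]
    (J : g →ₗ[ℝ] g) (hJ2 : ∀ v : g, J (J v) = -v)
    (hab : ∀ A B : g, ⁅J A, J B⁆ = ⁅A, B⁆) (a h : ℕ) (hh : 1 ≤ h)
    (ω : (ℂ ⊗[ℝ] g) →ₗ[ℂ] ℂ)
    (hω10 : ∀ x ∈ eig g J Complex.I, ω x = 0)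
    (hω01 : ∀ x ∈ gJ01 g J h, ω x = 0) :
    ∀ V ∈ gJ10 g J a, ∀ Y ∈ gJ01 g J (h - 1), ω ⁅V, Y⁆ = 0 := by
  intro V _ Y hY
  obtain ⟨m, rfl⟩ := Nat.exists_eq_add_of_le' hh
  exact statement6_general hJ2 hab m ω (fun x hx ↦ hω10 x hx.2) hω01 V hY.1
end
end

section
/- Let W_{4n+6} be the real Lie algebra with basis {X_{4k+1}, X_{4k+2}, X_{4k+3}, X_{4k+4}, Z_1, Z_2 : 0 ≤ k ≤ n} and only non-zero brackets [X_{4k+1}, X_{4k+3}] = −(1/2)Z_1, [X_{4k+1}, X_{4k+4}] = −(1/2)Z_2, [X_{4k+2}, X_{4k+3}] = −(1/2)Z_2, [X_{4k+2}, X_{4k+4}] = (1/2)Z_1, and define J by JX_{4k+1} = X_{4k+2}, JX_{4k+3} = −X_{4k+4}, JZ_1 = −Z_2. Set V = (Z_1 + iZ_2)/2, T_{2k+1} = (X_{4k+1} − iX_{4k+2})/2, T_{2k+2} = (X_{4k+3} + iX_{4k+4})/2, t^{1,0} = span_ℂ{T_1, …, T_{2n+2}}, t^{0,1} = span_ℂ{T̄_1,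 …, T̄_{2n+2}}, and let ρ be the ℂ-linear functional with ρ(V) = 1 and ρ = 0 on V̄ and all T_j, T̄_j, with conjugate ρ̄. Then: (i) J is an abelian complex structure and W_{4n+6} is 2-step nilpotent with center span{Z_1, Z_2}; (ii) the images in (t^{0,1})^* of the maps dρ : X ↦ (Ȳ ↦ −ρ([X, Ȳ])) and dρ̄ : T ↦ (Ȳ ↦ −ρ̄([T, Ȳ])) on t^{1,0} intersect only in {0}; (iii) the kernel of dρ̄ is span_ℂ{T_2, T_4, …, T_{2n+2}}. Consequently, for T ∈ t^{1,0} the equation ι_T dρ̄ = −ι_X dρ has a solution X ∈ t^{1,0} if and only if ι_T dρ̄ = 0, i.e. if and only if T ∈ span_ℂ{T_2, T_4, …, T_{2n+2}}; in particular for T = T_{2k+1} no solution exists, so ad_Λ(ρ̄) is not ∂̄-exact for Λ = V ∧ T_{2k+1} and the holomorphic Poisson spectral sequence fails to degenerate on its first page. -/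
open scoped TensorProduct

noncomputable section

/-- `(x - i y)/2` as an element of the complexification `ℂ ⊗[ℝ] h`. -/
def holo (h : Type) [AddCommGroup h] [Module ℝ h] (x y : h) : ℂ ⊗[ℝ] h :=
  ((1 : ℂ)/2) ⊗ₜ[ℝ] x - (Complex.I/2) ⊗ₜ[ℝ] y

/-- `(x + i y)/2` as an element of the complexification `ℂ ⊗[ℝ] h`. -/
def antiholo (h : Type) [AddCommGroup h] [Module ℝ h] (x y : h) : ℂ ⊗[ℝ] h :=
  ((1 : ℂ)/2) ⊗ₜ[ℝ] x + (Complex.I/2) ⊗ₜ[ℝ] y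

/-- The pairing `X ↦ (Y ↦ f ⁅X, Y⁆)` between two subspaces of a complex Lie algebra,
where `f` is a ℂ-linear functional. -/
def bracketPairing (L : Type) [LieRing L] [LieAlgebra ℂ L]
    (f : L →ₗ[ℂ] ℂ) (p q : Submodule ℂ L) : p →ₗ[ℂ] Module.Dual ℂ q where
  toFun X :=
    { toFun := fun Y => f ⁅(X : L), (Y : L)⁆
      map_add' := fun Y₁ Y₂ => by simp [lie_add]
      map_smul' := fun c Y => by simp [lie_smul] }
  map_add' X₁ X₂ := by
    ext Y
    simp [add_lie]
  map_smul' c X := by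
    ext Y
    simp [smul_lie]

/-!
On `t^{1,0} × t^{0,1}` the only non-zero brackets of the spanning vectors are
`⁅T_{2k+1}, T̄_{2k+2}⁆ = -V̄/2` and `⁅T_{2k+2}, T̄_{2k+1}⁆ = V/2`. Hence `dρ`, which does not see `V̄`,
takes values in functionals vanishing on every `T̄_{2k+2}`, whereas `dρ̄`, which does not see `V`,
takes values in functionals vanishing on every `T̄_{2k+1}`. These two kinds of functionals share
only `0`, so `ι_T dρ̄ = -ι_X dρ` forces `ι_T dρ̄ = 0`; and evaluating `dρ̄` on `T̄_{2k+2}` reads off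
the coefficient of `T_{2k+1}`, which identifies its kernel.
-/

section LinearAlgebra

theorem eq_zero_of_mem_span_range_of_dual {ι R M : Type*} [CommSemiring R] [NoZeroDivisors R]
    [AddCommMonoid M] [Module R M] {v : ι → M} {φ : ι → Module.Dual R M}
    (hself : ∀ k, φ k (v k) ≠ 0) (hne : ∀ k l, k ≠ l → φ l (v k) = 0)
    {x : M} (hx : x ∈ Submodule.span R (Set.range v)) (hφ : ∀ k, φ k x = 0) : x = 0 := by
  obtain ⟨c, rfl⟩ := Finsupp.mem_span_range_iff_exists_finsupp.mp hx
  have eval (l : ι) : φ l (c.sum fun k a => a • v k) = c l * φ l (v l) := by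
    rw [map_finsuppSum, Finsupp.sum_eq_single l] <;> simp +contextual [hne]
  have hc : c = 0 := by
    ext k
    exact (mul_eq_zero.mp ((eval k).symm.trans (hφ k))).resolve_right (hself k)
  simp [hc]

variable {R L M : Type*} [CommRing R] [LieRing L] [LieAlgebra R L] [AddCommGroup M] [Module R M]

theorem map_lie_eq_zero_of_mem_span_left (f : L →ₗ[R] M) {s : Set L} {x y : L}
    (h : ∀ x ∈ s, f ⁅x, y⁆ = 0) (hx : x ∈ Submodule.span R s) : f ⁅x, y⁆ = 0 := by
  have hs : Submodule.span R s ≤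
      LinearMap.ker (f ∘ₗ (LieModule.toEnd R L L : L →ₗ[R] L →ₗ[R] L).flip y) :=
    Submodule.span_le.mpr h
  exact hs hx

theorem map_lie_eq_zero_of_mem_span_right (f : L →ₗ[R] M) {t : Set L} {x y : L}
    (h : ∀ y ∈ t, f ⁅x, y⁆ = 0) (hy : y ∈ Submodule.span R t) : f ⁅x, y⁆ = 0 := by
  have ht : Submodule.span R t ≤ LinearMap.ker (f ∘ₗ LieModule.toEnd R L L x) :=
    Submodule.span_le.mpr h
  exact ht hy

end LinearAlgebra

section Complexification

variable {g : Type} [LieRing g] [LieAlgebra ℝ g] (x y u v : g)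

theorem antiholo_eq_holo_neg : antiholo g x y = holo g x (-y) := by
  rw [antiholo, holo, TensorProduct.tmul_neg, sub_neg_eq_add]

theorem holo_smul (r : ℝ) : holo g (r • x) (r • y) = (r : ℂ) • holo g x y := by
  simp only [holo, smul_sub, ← TensorProduct.smul_tmul, TensorProduct.smul_tmul',
    Complex.real_smul, smul_eq_mul]

theorem antiholo_smul (r : ℝ) : antiholo g (r • x) (r • y) = (r : ℂ) • antiholo g x y := by
  rw [antiholo_eq_holo_neg, antiholo_eq_holo_neg, ← smul_neg, holo_smul]

theorem lie_holo_holo :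
    ⁅holo g x y, holo g u v⁆ = (1 / 2 : ℂ) • holo g (⁅x, u⁆ - ⁅y, v⁆) (⁅x, v⁆ + ⁅y, u⁆) := by
  have tmul_eq (c : ℂ) (z : g) : c ⊗ₜ[ℝ] z = c • ((1 : ℂ) ⊗ₜ[ℝ] z) := by
    rw [TensorProduct.smul_tmul', smul_eq_mul, mul_one]
  simp only [holo, sub_lie, lie_sub, LieAlgebra.ExtendScalars.bracket_tmul,
    TensorProduct.tmul_add, TensorProduct.tmul_sub]
  simp only [tmul_eq (_ * _), tmul_eq (_ / _)]
  linear_combination (norm := module) (1 / 4 * Complex.I_sq) • (1 : ℂ) ⊗ₜ[ℝ] ⁅y, v⁆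

theorem lie_antiholo_antiholo :
    ⁅antiholo g x y, antiholo g u v⁆ =
      (1 / 2 : ℂ) • antiholo g (⁅x, u⁆ - ⁅y, v⁆) (⁅x, v⁆ + ⁅y, u⁆) := by
  simp only [antiholo_eq_holo_neg, lie_holo_holo, neg_lie, lie_neg, neg_neg, neg_add]

theorem lie_holo_antiholo :
    ⁅holo g x y, antiholo g u v⁆ =
      (1 / 2 : ℂ) • holo g (⁅x, u⁆ + ⁅y, v⁆) (⁅y, u⁆ - ⁅x, v⁆) := by
  simp only [antiholo_eq_holo_neg, lie_holo_holo, lie_neg, sub_neg_eq_add, neg_add_eq_sub]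

theorem lie_antiholo_holo :
    ⁅antiholo g x y, holo g u v⁆ =
      (1 / 2 : ℂ) • holo g (⁅x, u⁆ + ⁅y, v⁆) (⁅x, v⁆ - ⁅y, u⁆) := by
  simp only [antiholo_eq_holo_neg, lie_holo_holo, neg_lie, sub_eq_add_neg, neg_neg]

end Complexification

section BlockRelations

variable {g : Type*} [LieRing g] [LieAlgebra ℝ g] {ι : Type*} {X : ι → Fin 4 → g} {Z₁ Z₂ : g}

/-- The brackets `⁅X k i, X l j⁆` of `W_{4n+6}` among elements `X k i` (the paper's
`X_{4k+i+1}`) of a real Lie algebra, with the blocks indexed by an arbitrary type. -/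
structure BlockRelations (X : ι → Fin 4 → g) (Z₁ Z₂ : g) : Prop where
  lie_zero_two (k : ι) : ⁅X k 0, X k 2⁆ = -(1 / 2 : ℝ) • Z₁
  lie_zero_three (k : ι) : ⁅X k 0, X k 3⁆ = -(1 / 2 : ℝ) • Z₂
  lie_one_two (k : ι) : ⁅X k 1, X k 2⁆ = -(1 / 2 : ℝ) • Z₂
  lie_one_three (k : ι) : ⁅X k 1, X k 3⁆ = (1 / 2 : ℝ) • Z₁
  lie_zero_one (k : ι) : ⁅X k 0, X k 1⁆ = 0
  lie_two_three (k : ι) : ⁅X k 2, X k 3⁆ = 0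
  lie_of_ne (k l : ι) (hkl : k ≠ l) (i j : Fin 4) : ⁅X k i, X l j⁆ = 0

/-- The coefficients of `Z₁` in the brackets inside a block of `W_{4n+6}`. -/
def structureConst₁ : Matrix (Fin 4) (Fin 4) ℝ :=
  !![0, 0, -1 / 2, 0; 0, 0, 0, 1 / 2; 1 / 2, 0, 0, 0; 0, -1 / 2, 0, 0]

/-- The coefficients of `Z₂` in the brackets inside a block of `W_{4n+6}`. -/
def structureConst₂ : Matrix (Fin 4) (Fin 4) ℝ :=
  !![0, 0, 0, -1 / 2; 0, 0, -1 / 2, 0; 0, 1 / 2, 0, 0; 1 / 2, 0, 0, 0]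

theorem det_structureConst₁_ne_zero : structureConst₁.det ≠ 0 := by
  simp [structureConst₁, Matrix.det_succ_row_zero, Fin.sum_univ_succ, Fin.succAbove]

theorem BlockRelations.lie_self_block (h : BlockRelations X Z₁ Z₂) (k : ι) (i j : Fin 4) :
    ⁅X k i, X k j⁆ = structureConst₁ i j • Z₁ + structureConst₂ i j • Z₂ := by
  have lie_of_lt : ∀ i j, i < j →
      ⁅X k i, X k j⁆ = structureConst₁ i j • Z₁ + structureConst₂ i j • Z₂ := by
    intro i j hij
    fin_cases i <;> fin_cases j <;>
      first
      | exact absurd hij (by decide)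
      | simp [structureConst₁, structureConst₂, h.lie_zero_two, h.lie_zero_three, h.lie_one_two,
          h.lie_one_three, h.lie_zero_one, h.lie_two_three, neg_div]
  have skew₁ : structureConst₁ i j = -structureConst₁ j i := by
    fin_cases i <;> fin_cases j <;> simp [structureConst₁, neg_div]
  have skew₂ : structureConst₂ i j = -structureConst₂ j i := by
    fin_cases i <;> fin_cases j <;> simp [structureConst₂, neg_div]
  rcases lt_trichotomy i j with hij | rfl | hji
  · exact lie_of_lt i j hij
  · rw [lie_self, self_eq_neg.mp skew₁, self_eq_neg.mp skew₂, zero_smul, zero_smul, add_zero]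
  · rw [← lie_skew, lie_of_lt j i hji, skew₁, skew₂]
    module

end BlockRelations

section StandardBasis

variable {g : Type*} [LieRing g] [LieAlgebra ℝ g] {ι : Type*} {X : ι → Fin 4 → g} {Z₁ Z₂ : g}
  {b : Module.Basis ((ι × Fin 4) ⊕ Fin 2) ℝ g} {J : g →ₗ[ℝ] g}

/-- `b` presents `g` as the Lie algebra `W_{4n+6}` with basis `X k i`, `Z₁`, `Z₂`, with the blocks
indexed by an arbitrary type. -/
structure IsWBasis (b : Module.Basis ((ι × Fin 4) ⊕ Fin 2) ℝ g) (X : ι → Fin 4 → g)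
    (Z₁ Z₂ : g) : Prop extends BlockRelations X Z₁ Z₂ where
  inl_eq (k : ι) (i : Fin 4) : b (Sum.inl (k, i)) = X k i
  inr_zero_eq : b (Sum.inr 0) = Z₁
  inr_one_eq : b (Sum.inr 1) = Z₂
  lie_X_Z₁ (k : ι) (i : Fin 4) : ⁅X k i, Z₁⁆ = 0
  lie_X_Z₂ (k : ι) (i : Fin 4) : ⁅X k i, Z₂⁆ = 0
  lie_Z₁_Z₂ : ⁅Z₁, Z₂⁆ = 0

/-- `J` is the complex structure of the paper: `J X_{4k+1} = X_{4k+2}`, `J X_{4k+3} = -X_{4k+4}`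
and `J Z₁ = -Z₂`. -/
structure IsWComplexStructure (J : g →ₗ[ℝ] g) (X : ι → Fin 4 → g) (Z₁ Z₂ : g) : Prop where
  map_zero (k : ι) : J (X k 0) = X k 1
  map_one (k : ι) : J (X k 1) = -X k 0
  map_two (k : ι) : J (X k 2) = -X k 3
  map_three (k : ι) : J (X k 3) = X k 2
  map_Z₁ : J Z₁ = -Z₂
  map_Z₂ : J Z₂ = Z₁

/-- An abelian complex structure on a real Lie algebra: `J² = -1` and `⁅J a, J c⁆ = ⁅a, c⁆`. -/
def IsAbelianComplexStructure (J : g →ₗ[ℝ] g) : Prop :=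
  (∀ v, J (J v) = -v) ∧ ∀ a c, ⁅J a, J c⁆ = ⁅a, c⁆

namespace IsWBasis

theorem hom_ext (hb : IsWBasis b X Z₁ Z₂) {M : Type*} [AddCommGroup M] [Module ℝ M]
    {f f' : g →ₗ[ℝ] M} (hX : ∀ k i, f (X k i) = f' (X k i)) (hZ₁ : f Z₁ = f' Z₁)
    (hZ₂ : f Z₂ = f' Z₂) : f = f' := by
  refine b.ext ?_
  rintro (⟨k, i⟩ | i)
  · rw [hb.inl_eq, hX]
  · fin_cases i
    · simpa [hb.inr_zero_eq] using hZ₁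
    · simpa [hb.inr_one_eq] using hZ₂

theorem lie_Z₁ (hb : IsWBasis b X Z₁ Z₂) (u : g) : ⁅u, Z₁⁆ = 0 := by
  have h : (LieModule.toEnd ℝ g g : g →ₗ[ℝ] g →ₗ[ℝ] g).flip Z₁ = 0 :=
    hb.hom_ext hb.lie_X_Z₁ (lie_self Z₁) (by simp [← lie_skew Z₂ Z₁, hb.lie_Z₁_Z₂])
  exact DFunLike.congr_fun h u

theorem lie_Z₂ (hb : IsWBasis b X Z₁ Z₂) (u : g) : ⁅u, Z₂⁆ = 0 := by
  have h : (LieModule.toEnd ℝ g g : g →ₗ[ℝ] g →ₗ[ℝ] g).flip Z₂ = 0 :=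
    hb.hom_ext hb.lie_X_Z₂ hb.lie_Z₁_Z₂ (lie_self Z₂)
  exact DFunLike.congr_fun h u

theorem Z₁_lie (hb : IsWBasis b X Z₁ Z₂) (u : g) : ⁅Z₁, u⁆ = 0 := by
  rw [← lie_skew, hb.lie_Z₁, neg_zero]

theorem Z₂_lie (hb : IsWBasis b X Z₁ Z₂) (u : g) : ⁅Z₂, u⁆ = 0 := by
  rw [← lie_skew, hb.lie_Z₂, neg_zero]

theorem lie_eq_zero_of_mem_span (hb : IsWBasis b X Z₁ Z₂) {z : g}
    (hz : z ∈ Submodule.span ℝ {Z₁, Z₂}) (u : g) : ⁅z, u⁆ = 0 := by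
  obtain ⟨s, t, rfl⟩ := Submodule.mem_span_pair.mp hz
  simp only [add_lie, smul_lie, hb.Z₁_lie, hb.Z₂_lie, smul_zero, add_zero]

theorem lie_mem_span (hb : IsWBasis b X Z₁ Z₂) (a c : g) :
    ⁅a, c⁆ ∈ Submodule.span ℝ {Z₁, Z₂} := by
  set p : Submodule ℝ g := Submodule.span ℝ {Z₁, Z₂}
  have mem_X (k i l j) : ⁅X k i, X l j⁆ ∈ p := by
    by_cases hkl : k = l
    · subst hkl
      exact Submodule.mem_span_pair.mpr ⟨_, _, (hb.lie_self_block k i j).symm⟩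
    · simp [hb.lie_of_ne k l hkl]
  have h : (LieModule.toEnd ℝ g g : g →ₗ[ℝ] g →ₗ[ℝ] g).compr₂ p.mkQ = 0 :=
    hb.hom_ext
      (fun k i => hb.hom_ext (fun l j => by simpa using mem_X k i l j)
        (by simp [hb.lie_Z₁]) (by simp [hb.lie_Z₂]))
      (by ext; simp [hb.Z₁_lie]) (by ext; simp [hb.Z₂_lie])
  simpa using LinearMap.congr_fun₂ h a c

theorem lie_lie (hb : IsWBasis b X Z₁ Z₂) (a c e : g) : ⁅⁅a, c⁆, e⁆ = 0 :=
  hb.lie_eq_zero_of_mem_span (hb.lie_mem_span a c) e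

theorem isAbelianComplexStructure (hb : IsWBasis b X Z₁ Z₂)
    (hJ : IsWComplexStructure J X Z₁ Z₂) : IsAbelianComplexStructure J := by
  have sq_J : J ∘ₗ J = -LinearMap.id :=
    hb.hom_ext
      (fun k i => by fin_cases i <;> simp [hJ.map_zero, hJ.map_one, hJ.map_two, hJ.map_three])
      (by simp [hJ.map_Z₁, hJ.map_Z₂]) (by simp [hJ.map_Z₁, hJ.map_Z₂])
  have lie_J_X (k i l j) : ⁅J (X k i), J (X l j)⁆ = ⁅X k i, X l j⁆ := by
    by_cases hkl : k = l
    · subst hkl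
      fin_cases i <;> fin_cases j <;>
        simp [hJ.map_zero, hJ.map_one, hJ.map_two, hJ.map_three, hb.lie_self_block,
          structureConst₁, structureConst₂, neg_div]
    · fin_cases i <;> fin_cases j <;>
        simp [hJ.map_zero, hJ.map_one, hJ.map_two, hJ.map_three, hb.lie_of_ne k l hkl]
  have lie_J : (LieModule.toEnd ℝ g g : g →ₗ[ℝ] g →ₗ[ℝ] g).compl₁₂ J J =
      (LieModule.toEnd ℝ g g : g →ₗ[ℝ] g →ₗ[ℝ] g) :=
    hb.hom_ext
      (fun k i => hb.hom_ext (lie_J_X k i)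
        (by simp [hJ.map_Z₁, hb.lie_Z₁, hb.lie_Z₂]) (by simp [hJ.map_Z₂, hb.lie_Z₁, hb.lie_Z₂]))
      (by ext; simp [hJ.map_Z₁, hb.Z₁_lie, hb.Z₂_lie])
      (by ext; simp [hJ.map_Z₂, hb.Z₁_lie, hb.Z₂_lie])
  exact ⟨LinearMap.congr_fun sq_J, LinearMap.congr_fun₂ lie_J⟩

theorem exists_lie_ne_zero [Nonempty ι] (hb : IsWBasis b X Z₁ Z₂) : ∃ a c : g, ⁅a, c⁆ ≠ 0 := by
  obtain ⟨k⟩ := ‹Nonempty ι›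
  have hZ₁ : Z₁ ≠ 0 := hb.inr_zero_eq ▸ b.ne_zero _
  exact ⟨X k 0, X k 2, by simp [hb.lie_zero_two, hZ₁]⟩

theorem repr_X (hb : IsWBasis b X Z₁ Z₂) (k : ι) (i : Fin 4) :
    b.repr (X k i) = Finsupp.single (Sum.inl (k, i)) 1 := by
  rw [← hb.inl_eq, b.repr_self]

theorem repr_Z₁ (hb : IsWBasis b X Z₁ Z₂) : b.repr Z₁ = Finsupp.single (Sum.inr 0) 1 := by
  rw [← hb.inr_zero_eq, b.repr_self]

theorem repr_Z₂ (hb : IsWBasis b X Z₁ Z₂) : b.repr Z₂ = Finsupp.single (Sum.inr 1) 1 := by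
  rw [← hb.inr_one_eq, b.repr_self]

theorem repr_lie_X_inr_zero (hb : IsWBasis b X Z₁ Z₂) (w : g) (k : ι) (j : Fin 4) :
    b.repr ⁅w, X k j⁆ (Sum.inr 0) = ∑ i, b.repr w (Sum.inl (k, i)) * structureConst₁ i j := by
  have h : b.coord (Sum.inr 0) ∘ₗ (LieModule.toEnd ℝ g g : g →ₗ[ℝ] g →ₗ[ℝ] g).flip (X k j) =
      ∑ i, structureConst₁ i j • b.coord (Sum.inl (k, i)) := by
    refine hb.hom_ext (fun l i => ?_) ?_ ?_
    · by_cases hlk : l = k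
      · subst hlk
        classical
        simp [hb.lie_self_block, hb.repr_X, hb.repr_Z₁, hb.repr_Z₂, Finsupp.single_apply]
      · simp [hb.lie_of_ne l k hlk, hb.repr_X, hlk]
    · simp [hb.Z₁_lie, hb.repr_Z₁]
    · simp [hb.Z₂_lie, hb.repr_Z₂]
  simpa [mul_comm] using LinearMap.congr_fun h w

theorem forall_lie_eq_zero_iff (hb : IsWBasis b X Z₁ Z₂) (w : g) :
    (∀ u : g, ⁅w, u⁆ = 0) ↔ w ∈ Submodule.span ℝ {Z₁, Z₂} := by
  refine ⟨fun hw => ?_, hb.lie_eq_zero_of_mem_span⟩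
  have repr_block (k) : (fun i => b.repr w (Sum.inl (k, i))) = 0 := by
    refine Matrix.eq_zero_of_vecMul_eq_zero det_structureConst₁_ne_zero (funext fun j => ?_)
    exact (hb.repr_lie_X_inr_zero w k j).symm.trans (by simp [hw])
  have repr_inl (k i) : b.repr w (Sum.inl (k, i)) = 0 := congr_fun (repr_block k) i
  refine Submodule.mem_span_pair.mpr ⟨b.repr w (Sum.inr 0), b.repr w (Sum.inr 1), ?_⟩
  refine b.ext_elem ?_
  rintro (⟨k, i⟩ | i)
  · simp [hb.repr_Z₁, hb.repr_Z₂, repr_inl]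
  · fin_cases i <;> simp [hb.repr_Z₁, hb.repr_Z₂]

end IsWBasis

end StandardBasis

section Pairing

variable {g : Type} [LieRing g] [LieAlgebra ℝ g] {ι : Type*} {X : ι → Fin 4 → g} {Z₁ Z₂ : g}
  {ρ ρbar : (ℂ ⊗[ℝ] g) →ₗ[ℂ] ℂ}

variable (X) in
/-- The vectors `T_{2k+1} = (X_{4k+1} - i X_{4k+2})/2`. -/
def oddT (k : ι) : ℂ ⊗[ℝ] g := holo g (X k 0) (X k 1)

variable (X) in
/-- The vectors `T_{2k+2} = (X_{4k+3} + i X_{4k+4})/2`. -/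
def evenT (k : ι) : ℂ ⊗[ℝ] g := antiholo g (X k 2) (X k 3)

variable (X) in
/-- The complex conjugates of the vectors `T_{2k+1}`. -/
def oddTbar (k : ι) : ℂ ⊗[ℝ] g := antiholo g (X k 0) (X k 1)

variable (X) in
/-- The complex conjugates of the vectors `T_{2k+2}`. -/
def evenTbar (k : ι) : ℂ ⊗[ℝ] g := holo g (X k 2) (X k 3)

variable (X) in
/-- The space `t^{1,0}` spanned by all the `T_j`. -/
def holomorphicSpan : Submodule ℂ (ℂ ⊗[ℝ] g) :=
  Submodule.span ℂ (Set.range (oddT X) ∪ Set.range (evenT X))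

variable (X) in
/-- The space `t^{0,1}` spanned by all the conjugates of the `T_j`. -/
def antiholomorphicSpan : Submodule ℂ (ℂ ⊗[ℝ] g) :=
  Submodule.span ℂ (Set.range (oddTbar X) ∪ Set.range (evenTbar X))

theorem oddT_mem_holomorphicSpan (k : ι) : oddT X k ∈ holomorphicSpan X :=
  Submodule.subset_span (Or.inl ⟨k, rfl⟩)

theorem oddTbar_mem_antiholomorphicSpan (k : ι) : oddTbar X k ∈ antiholomorphicSpan X :=
  Submodule.subset_span (Or.inl ⟨k, rfl⟩)

theorem evenTbar_mem_antiholomorphicSpan (k : ι) : evenTbar X k ∈ antiholomorphicSpan X :=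
  Submodule.subset_span (Or.inr ⟨k, rfl⟩)

theorem exists_add_of_mem_holomorphicSpan {T : ℂ ⊗[ℝ] g} (hT : T ∈ holomorphicSpan X) :
    ∃ a ∈ Submodule.span ℂ (Set.range (oddT X)), ∃ c ∈ Submodule.span ℂ (Set.range (evenT X)),
      a + c = T := by
  rwa [holomorphicSpan, Submodule.span_union, Submodule.mem_sup] at hT

namespace BlockRelations

theorem lie_oddT_oddTbar (h : BlockRelations X Z₁ Z₂) (k l : ι) :
    ⁅oddT X k, oddTbar X l⁆ = 0 := by
  rw [oddT, oddTbar, lie_holo_antiholo]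
  by_cases hkl : k = l
  · subst hkl
    simp [h.lie_self_block, structureConst₁, structureConst₂, holo]
  · simp [h.lie_of_ne k l hkl, holo]

theorem lie_evenT_evenTbar (h : BlockRelations X Z₁ Z₂) (k l : ι) :
    ⁅evenT X k, evenTbar X l⁆ = 0 := by
  rw [evenT, evenTbar, lie_antiholo_holo]
  by_cases hkl : k = l
  · subst hkl
    simp [h.lie_self_block, structureConst₁, structureConst₂, holo]
  · simp [h.lie_of_ne k l hkl, holo]

theorem lie_oddT_evenTbar_of_ne (h : BlockRelations X Z₁ Z₂) {k l : ι} (hkl : k ≠ l) :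
    ⁅oddT X k, evenTbar X l⁆ = 0 := by
  simp [oddT, evenTbar, h.lie_of_ne k l hkl, holo]

theorem lie_evenT_oddTbar_of_ne (h : BlockRelations X Z₁ Z₂) {k l : ι} (hkl : k ≠ l) :
    ⁅evenT X k, oddTbar X l⁆ = 0 := by
  simp [evenT, oddTbar, h.lie_of_ne k l hkl, antiholo]

theorem lie_oddT_evenTbar_self (h : BlockRelations X Z₁ Z₂) (k : ι) :
    ⁅oddT X k, evenTbar X k⁆ = -(1 / 2 : ℂ) • holo g Z₁ Z₂ := by
  have hZ₁ : ⁅X k 0, X k 2⁆ - ⁅X k 1, X k 3⁆ = (-1 : ℝ) • Z₁ := by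
    rw [h.lie_zero_two, h.lie_one_three]
    module
  have hZ₂ : ⁅X k 0, X k 3⁆ + ⁅X k 1, X k 2⁆ = (-1 : ℝ) • Z₂ := by
    rw [h.lie_zero_three, h.lie_one_two]
    module
  rw [oddT, evenTbar, lie_holo_holo, hZ₁, hZ₂, holo_smul, smul_smul]
  norm_num

theorem lie_evenT_oddTbar_self (h : BlockRelations X Z₁ Z₂) (k : ι) :
    ⁅evenT X k, oddTbar X k⁆ = (1 / 2 : ℂ) • antiholo g Z₁ Z₂ := by
  have hZ₁ : ⁅X k 2, X k 0⁆ - ⁅X k 3, X k 1⁆ = (1 : ℝ) • Z₁ := by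
    rw [← lie_skew, ← lie_skew (X k 3), h.lie_zero_two, h.lie_one_three]
    module
  have hZ₂ : ⁅X k 2, X k 1⁆ + ⁅X k 3, X k 0⁆ = (1 : ℝ) • Z₂ := by
    rw [← lie_skew, ← lie_skew (X k 3), h.lie_one_two, h.lie_zero_three]
    module
  rw [evenT, oddTbar, lie_antiholo_antiholo, hZ₁, hZ₂, one_smul, one_smul]

theorem map_lie_evenTbar_eq_zero (h : BlockRelations X Z₁ Z₂) (hρ : ρ (holo g Z₁ Z₂) = 0)
    {T : ℂ ⊗[ℝ] g} (hT : T ∈ holomorphicSpan X) (l : ι) : ρ ⁅T, evenTbar X l⁆ = 0 := by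
  refine map_lie_eq_zero_of_mem_span_left ρ ?_ hT
  rintro _ (⟨k, rfl⟩ | ⟨k, rfl⟩)
  · obtain rfl | hkl := eq_or_ne k l
    · rw [h.lie_oddT_evenTbar_self, map_smul, hρ, smul_zero]
    · rw [h.lie_oddT_evenTbar_of_ne hkl, map_zero]
  · rw [h.lie_evenT_evenTbar, map_zero]

theorem map_lie_oddTbar_eq_zero (h : BlockRelations X Z₁ Z₂)
    (hρbar : ρbar (antiholo g Z₁ Z₂) = 0) {T : ℂ ⊗[ℝ] g} (hT : T ∈ holomorphicSpan X) (l : ι) :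
    ρbar ⁅T, oddTbar X l⁆ = 0 := by
  refine map_lie_eq_zero_of_mem_span_left ρbar ?_ hT
  rintro _ (⟨k, rfl⟩ | ⟨k, rfl⟩)
  · rw [h.lie_oddT_oddTbar, map_zero]
  · obtain rfl | hkl := eq_or_ne k l
    · rw [h.lie_evenT_oddTbar_self, map_smul, hρbar, smul_zero]
    · rw [h.lie_evenT_oddTbar_of_ne hkl, map_zero]

theorem map_lie_eq_zero_of_forall_eq (h : BlockRelations X Z₁ Z₂) (hρ : ρ (holo g Z₁ Z₂) = 0)
    (hρbar : ρbar (antiholo g Z₁ Z₂) = 0) {S T : ℂ ⊗[ℝ] g} (hS : S ∈ holomorphicSpan X)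
    (hT : T ∈ holomorphicSpan X) (hST : ∀ Y ∈ antiholomorphicSpan X, ρ ⁅S, Y⁆ = ρbar ⁅T, Y⁆) :
    ∀ Y ∈ antiholomorphicSpan X, ρ ⁅S, Y⁆ = 0 := by
  refine fun Y hY => map_lie_eq_zero_of_mem_span_right ρ ?_ hY
  rintro _ (⟨l, rfl⟩ | ⟨l, rfl⟩)
  · rw [hST _ (oddTbar_mem_antiholomorphicSpan l), h.map_lie_oddTbar_eq_zero hρbar hT]
  · exact h.map_lie_evenTbar_eq_zero hρ hS l

theorem map_lie_oddT_evenTbar_ne_zero (h : BlockRelations X Z₁ Z₂)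
    (hρbar : ρbar (holo g Z₁ Z₂) ≠ 0) (k : ι) : ρbar ⁅oddT X k, evenTbar X k⁆ ≠ 0 := by
  simp [h.lie_oddT_evenTbar_self, hρbar]

theorem lie_evenTbar_of_mem_span_evenT (h : BlockRelations X Z₁ Z₂) {T : ℂ ⊗[ℝ] g}
    (hT : T ∈ Submodule.span ℂ (Set.range (evenT X))) (l : ι) : ⁅T, evenTbar X l⁆ = 0 := by
  refine map_lie_eq_zero_of_mem_span_left LinearMap.id ?_ hT
  rintro _ ⟨k, rfl⟩
  exact h.lie_evenT_evenTbar k l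

theorem eq_zero_of_map_lie_evenTbar_eq_zero (h : BlockRelations X Z₁ Z₂)
    (hρbar : ρbar (holo g Z₁ Z₂) ≠ 0) {a : ℂ ⊗[ℝ] g}
    (ha : a ∈ Submodule.span ℂ (Set.range (oddT X)))
    (ha' : ∀ l, ρbar ⁅a, evenTbar X l⁆ = 0) : a = 0 :=
  eq_zero_of_mem_span_range_of_dual (v := oddT X)
    (φ := fun l => ρbar ∘ₗ (LieModule.toEnd ℂ (ℂ ⊗[ℝ] g) (ℂ ⊗[ℝ] g) :
      (ℂ ⊗[ℝ] g) →ₗ[ℂ] (ℂ ⊗[ℝ] g) →ₗ[ℂ] (ℂ ⊗[ℝ] g)).flip (evenTbar X l))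
    (h.map_lie_oddT_evenTbar_ne_zero hρbar)
    (fun _ _ hkl => (congrArg ρbar (h.lie_oddT_evenTbar_of_ne hkl)).trans (map_zero ρbar)) ha ha'

theorem forall_map_lie_eq_zero_iff (h : BlockRelations X Z₁ Z₂)
    (hρbar : ρbar (antiholo g Z₁ Z₂) = 0) (hρbar' : ρbar (holo g Z₁ Z₂) ≠ 0)
    {T : ℂ ⊗[ℝ] g} (hT : T ∈ holomorphicSpan X) :
    (∀ Y ∈ antiholomorphicSpan X, ρbar ⁅T, Y⁆ = 0) ↔
      T ∈ Submodule.span ℂ (Set.range (evenT X)) := by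
  refine ⟨fun hker => ?_, fun hT' Y hY => ?_⟩
  · obtain ⟨a, ha, c, hc, rfl⟩ := exists_add_of_mem_holomorphicSpan hT
    have ha' (l) : ρbar ⁅a, evenTbar X l⁆ = 0 := by
      have := hker _ (evenTbar_mem_antiholomorphicSpan l)
      rwa [add_lie, h.lie_evenTbar_of_mem_span_evenT hc, add_zero] at this
    rwa [h.eq_zero_of_map_lie_evenTbar_eq_zero hρbar' ha ha', zero_add]
  · refine map_lie_eq_zero_of_mem_span_right ρbar ?_ hY
    rintro _ (⟨l, rfl⟩ | ⟨l, rfl⟩)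
    · exact h.map_lie_oddTbar_eq_zero hρbar hT l
    · rw [h.lie_evenTbar_of_mem_span_evenT hT', map_zero]

theorem exists_map_lie_eq_neg_iff (h : BlockRelations X Z₁ Z₂) (hρ : ρ (holo g Z₁ Z₂) = 0)
    (hρbar : ρbar (antiholo g Z₁ Z₂) = 0) (hρbar' : ρbar (holo g Z₁ Z₂) ≠ 0)
    {T : ℂ ⊗[ℝ] g} (hT : T ∈ holomorphicSpan X) :
    (∃ x ∈ holomorphicSpan X, ∀ Y ∈ antiholomorphicSpan X, ρbar ⁅T, Y⁆ = -ρ ⁅x, Y⁆) ↔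
      T ∈ Submodule.span ℂ (Set.range (evenT X)) := by
  rw [← h.forall_map_lie_eq_zero_iff hρbar hρbar' hT]
  refine ⟨?_, fun hker => ⟨0, zero_mem _, by simpa using hker⟩⟩
  rintro ⟨x, hx, hTx⟩ Y hY
  have hTx' : ∀ Y ∈ antiholomorphicSpan X, ρ ⁅-x, Y⁆ = ρbar ⁅T, Y⁆ := fun Y hY => by
    rw [neg_lie, map_neg, hTx Y hY]
  exact (hTx' Y hY).symm.trans
    (h.map_lie_eq_zero_of_forall_eq hρ hρbar (neg_mem hx) hT hTx' Y hY)

theorem oddT_notMem_span_evenT (h : BlockRelations X Z₁ Z₂) (hρbar : ρbar (holo g Z₁ Z₂) ≠ 0)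
    (k : ι) : oddT X k ∉ Submodule.span ℂ (Set.range (evenT X)) := fun hk =>
  h.map_lie_oddT_evenTbar_ne_zero hρbar k <| by
    rw [h.lie_evenTbar_of_mem_span_evenT hk, map_zero]

end BlockRelations

end Pairing

theorem statement15_general {ι : Type*} [Nonempty ι] {g : Type} [LieRing g] [LieAlgebra ℝ g]
    {X : ι → Fin 4 → g} {Z₁ Z₂ : g} {b : Module.Basis ((ι × Fin 4) ⊕ Fin 2) ℝ g}
    (hb : IsWBasis b X Z₁ Z₂) {J : g →ₗ[ℝ] g} (hJ : IsWComplexStructure J X Z₁ Z₂)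
    {ρ ρbar : (ℂ ⊗[ℝ] g) →ₗ[ℂ] ℂ} (hρ : ρ (holo g Z₁ Z₂) = 0)
    (hρbar : ρbar (antiholo g Z₁ Z₂) = 0) (hρbar' : ρbar (holo g Z₁ Z₂) ≠ 0) :
    IsAbelianComplexStructure J ∧
    ((∀ a c e : g, ⁅⁅a, c⁆, e⁆ = 0) ∧ (∃ a c : g, ⁅a, c⁆ ≠ 0) ∧
      ∀ w : g, (∀ u : g, ⁅w, u⁆ = 0) ↔ w ∈ Submodule.span ℝ {Z₁, Z₂}) ∧
    (∀ S ∈ holomorphicSpan X, ∀ T ∈ holomorphicSpan X,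
      (∀ Y ∈ antiholomorphicSpan X, ρ ⁅S, Y⁆ = ρbar ⁅T, Y⁆) →
        ∀ Y ∈ antiholomorphicSpan X, ρ ⁅S, Y⁆ = 0) ∧
    (∀ T ∈ holomorphicSpan X, (∀ Y ∈ antiholomorphicSpan X, ρbar ⁅T, Y⁆ = 0) ↔
      T ∈ Submodule.span ℂ (Set.range (evenT X))) ∧
    (∀ T ∈ holomorphicSpan X,
      (∃ x ∈ holomorphicSpan X, ∀ Y ∈ antiholomorphicSpan X, ρbar ⁅T, Y⁆ = -ρ ⁅x, Y⁆) ↔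
        T ∈ Submodule.span ℂ (Set.range (evenT X))) ∧
    ∀ k, ¬∃ x ∈ holomorphicSpan X,
      ∀ Y ∈ antiholomorphicSpan X, ρbar ⁅oddT X k, Y⁆ = -ρ ⁅x, Y⁆ := by
  have h := hb.toBlockRelations
  refine ⟨hb.isAbelianComplexStructure hJ,
    ⟨hb.lie_lie, hb.exists_lie_ne_zero, hb.forall_lie_eq_zero_iff⟩,
    fun S hS T hT => h.map_lie_eq_zero_of_forall_eq hρ hρbar hS hT,
    fun T hT => h.forall_map_lie_eq_zero_iff hρbar hρbar' hT,
    fun T hT => h.exists_map_lie_eq_neg_iff hρ hρbar hρbar' hT, fun k hk => ?_⟩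
  exact h.oddT_notMem_span_evenT hρbar' k <|
    (h.exists_map_lie_eq_neg_iff hρ hρbar hρbar' (oddT_mem_holomorphicSpan k)).mp hk

/-- The 2-step nilpotent Lie algebra `W_{4n+6}` (blocks
`X_{4k+1}, …, X_{4k+4}`, `0 ≤ k ≤ n`, center `Z_1, Z_2`, here `X k i := X_{4k+i+1}`), with
`V = (Z_1 + iZ_2)/2`, `T_{2k+1} = (X_{4k+1} - iX_{4k+2})/2`, `T_{2k+2} = (X_{4k+3} + iX_{4k+4})/2`,
`ρ` dual to `V` and conjugate `ρ̄`: (i) `J` is an abelian complex structure and `W` is 2-step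
nilpotent with center `span{Z_1, Z_2}`; (ii) the images of `dρ` and `dρ̄` intersect only in `0`;
(iii) the kernel of `dρ̄` is `span{T_2, T_4, …, T_{2n+2}}`. Consequently `ι_T dρ̄ = -ι_X dρ` is
solvable iff `T ∈ span{T_{2k+2}}`, and for `T = T_{2k+1}` no solution exists. -/
theorem statement15 (n : ℕ) (g : Type) [LieRing g] [LieAlgebra ℝ g]
    (X : Fin (n + 1) → Fin 4 → g) (Z1 Z2 : g)
    (b : Module.Basis ((Fin (n + 1) × Fin 4) ⊕ Fin 2) ℝ g)
    (hbX : ∀ k i, b (Sum.inl (k, i)) = X k i)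
    (hbZ1 : b (Sum.inr 0) = Z1) (hbZ2 : b (Sum.inr 1) = Z2)
    (h13 : ∀ k, ⁅X k 0, X k 2⁆ = -(1/2 : ℝ) • Z1)
    (h14 : ∀ k, ⁅X k 0, X k 3⁆ = -(1/2 : ℝ) • Z2)
    (h23 : ∀ k, ⁅X k 1, X k 2⁆ = -(1/2 : ℝ) • Z2)
    (h24 : ∀ k, ⁅X k 1, X k 3⁆ = (1/2 : ℝ) • Z1)
    (h12 : ∀ k, ⁅X k 0, X k 1⁆ = 0)
    (h34 : ∀ k, ⁅X k 2, X k 3⁆ = 0)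
    (hcross : ∀ k l, k ≠ l → ∀ i i', ⁅X k i, X l i'⁆ = 0)
    (hZ1c : ∀ k i, ⁅X k i, Z1⁆ = 0) (hZ2c : ∀ k i, ⁅X k i, Z2⁆ = 0)
    (hZZ : ⁅Z1, Z2⁆ = 0)
    (J : g →ₗ[ℝ] g)
    (hJ1 : ∀ k, J (X k 0) = X k 1) (hJ2' : ∀ k, J (X k 1) = -X k 0)
    (hJ3 : ∀ k, J (X k 2) = -X k 3) (hJ4 : ∀ k, J (X k 3) = X k 2)
    (hJZ1 : J Z1 = -Z2) (hJZ2 : J Z2 = Z1)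
    (ρ : (ℂ ⊗[ℝ] g) →ₗ[ℂ] ℂ)
    (hρV : ρ (antiholo g Z1 Z2) = 1) (hρVb : ρ (holo g Z1 Z2) = 0)
    (hρ1 : ∀ k, ρ (holo g (X k 0) (X k 1)) = 0)
    (hρ1b : ∀ k, ρ (antiholo g (X k 0) (X k 1)) = 0)
    (hρ2 : ∀ k, ρ (antiholo g (X k 2) (X k 3)) = 0)
    (hρ2b : ∀ k, ρ (holo g (X k 2) (X k 3)) = 0)
    (ρbar : (ℂ ⊗[ℝ] g) →ₗ[ℂ] ℂ)
    (hρbV : ρbar (antiholo g Z1 Z2) = 0) (hρbVb : ρbar (holo g Z1 Z2) = 1)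
    (hρb1 : ∀ k, ρbar (holo g (X k 0) (X k 1)) = 0)
    (hρb1b : ∀ k, ρbar (antiholo g (X k 0) (X k 1)) = 0)
    (hρb2 : ∀ k, ρbar (antiholo g (X k 2) (X k 3)) = 0)
    (hρb2b : ∀ k, ρbar (holo g (X k 2) (X k 3)) = 0) :
    -- (i) abelian complex structure, 2-step nilpotency, center = span{Z1, Z2}
    ((∀ v : g, J (J v) = -v) ∧ (∀ a c : g, ⁅J a, J c⁆ = ⁅a, c⁆)) ∧
    ((∀ a c e : g, ⁅⁅a, c⁆, e⁆ = 0) ∧ (∃ a c : g, ⁅a, c⁆ ≠ 0) ∧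
      (∀ w : g, (∀ u : g, ⁅w, u⁆ = 0) ↔ w ∈ Submodule.span ℝ ({Z1, Z2} : Set g))) ∧
    -- (ii) the images of dρ and dρ̄ on t^{1,0} intersect only in {0}
    (∀ S ∈ Submodule.span ℂ
        ((Set.range fun k => holo g (X k 0) (X k 1)) ∪
          (Set.range fun k => antiholo g (X k 2) (X k 3))),
      ∀ T ∈ Submodule.span ℂ
        ((Set.range fun k => holo g (X k 0) (X k 1)) ∪
          (Set.range fun k => antiholo g (X k 2) (X k 3))),
      (∀ Y ∈ Submodule.span ℂ
          ((Set.range fun k => antiholo g (X k 0) (X k 1)) ∪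
            (Set.range fun k => holo g (X k 2) (X k 3))),
        ρ ⁅S, Y⁆ = ρbar ⁅T, Y⁆) →
      (∀ Y ∈ Submodule.span ℂ
          ((Set.range fun k => antiholo g (X k 0) (X k 1)) ∪
            (Set.range fun k => holo g (X k 2) (X k 3))),
        ρ ⁅S, Y⁆ = 0)) ∧
    -- (iii) kernel of dρ̄ is span{T_2, T_4, …, T_{2n+2}}
    (∀ T ∈ Submodule.span ℂ
        ((Set.range fun k => holo g (X k 0) (X k 1)) ∪
          (Set.range fun k => antiholo g (X k 2) (X k 3))),
      ((∀ Y ∈ Submodule.span ℂ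
          ((Set.range fun k => antiholo g (X k 0) (X k 1)) ∪
            (Set.range fun k => holo g (X k 2) (X k 3))),
        ρbar ⁅T, Y⁆ = 0) ↔
        T ∈ Submodule.span ℂ (Set.range fun k => antiholo g (X k 2) (X k 3)))) ∧
    -- consequence: solvability of ι_T dρ̄ = -ι_X dρ iff T ∈ span{T_{2k+2}}
    (∀ T ∈ Submodule.span ℂ
        ((Set.range fun k => holo g (X k 0) (X k 1)) ∪
          (Set.range fun k => antiholo g (X k 2) (X k 3))),
      ((∃ x ∈ Submodule.span ℂ
          ((Set.range fun k => holo g (X k 0) (X k 1)) ∪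
            (Set.range fun k => antiholo g (X k 2) (X k 3))),
        ∀ Y ∈ Submodule.span ℂ
          ((Set.range fun k => antiholo g (X k 0) (X k 1)) ∪
            (Set.range fun k => holo g (X k 2) (X k 3))),
          ρbar ⁅T, Y⁆ = -ρ ⁅x, Y⁆) ↔
        T ∈ Submodule.span ℂ (Set.range fun k => antiholo g (X k 2) (X k 3)))) ∧
    -- in particular, no solution exists for T = T_{2k+1}
    (∀ k, ¬ ∃ x ∈ Submodule.span ℂ
        ((Set.range fun k' => holo g (X k' 0) (X k' 1)) ∪
          (Set.range fun k' => antiholo g (X k' 2) (X k' 3))),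
      ∀ Y ∈ Submodule.span ℂ
        ((Set.range fun k' => antiholo g (X k' 0) (X k' 1)) ∪
          (Set.range fun k' => holo g (X k' 2) (X k' 3))),
        ρbar ⁅holo g (X k 0) (X k 1), Y⁆ = -ρ ⁅x, Y⁆) :=
  statement15_general ⟨⟨h13, h14, h23, h24, h12, h34, hcross⟩, hbX, hbZ1, hbZ2, hZ1c, hZ2c, hZZ⟩
    ⟨hJ1, hJ2', hJ3, hJ4, hJZ1, hJZ2⟩ hρVb hρbV (hρbVb ▸ one_ne_zero)
end
end
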